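/- Let g : ℝ^n → ℝ be a polynomial, let 0 ≤ λ ≤ 1, and let β ∈ ℕ^n be a multi-index. Then E_{x∼N(0,1)^n}[ (ĝ_{λ|x}(β))² ] = Σ_{γ ≥ β} ( ∏_{j=1}^n binom(γ_j, β_j)·λ^{β_j}·(1−λ)^{γ_j−β_j} ) · ĝ(γ)², where the sum is over multi-indices γ ∈ ℕ^n with γ_j ≥ β_j for all j, and ĝ_{λ|x}(β) denotes the β-th Hermite coefficient of the zoom g_{λ|x}. -/

import Mathlib

open MeasureTheory ProbabilityTheory MvPolynomial

/-- The standard Gaussian measure `N(0,1)^n` on `ℝ^n`. -/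
noncomputable def gaussianN (n : ℕ) : Measure (Fin n → ℝ) :=
  Measure.pi fun _ => gaussianReal 0 1

/-- The normalized probabilists' Hermite polynomial `h_k = H_k / √(k!)`. -/
noncomputable def hermiteFn (k : ℕ) (t : ℝ) : ℝ :=
  ((Polynomial.hermite k).map (Int.castRingHom ℝ)).eval t / Real.sqrt (Nat.factorial k)

/-- The multivariate Hermite polynomial `h_α(x) = ∏ i, h_{α i}(x i)`. -/
noncomputable def hermiteMv {n : ℕ} (α : Fin n → ℕ) (x : Fin n → ℝ) : ℝ :=
  ∏ i, hermiteFn (α i) (x i)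

/-- Hermite coefficient `f̂(α) = E_{x ∼ N(0,1)^n}[f(x)·h_α(x)]` of a function. -/
noncomputable def hermiteCoeffF {n : ℕ} (f : (Fin n → ℝ) → ℝ) (α : Fin n → ℕ) : ℝ :=
  ∫ x, f x * hermiteMv α x ∂(gaussianN n)

/-- Hermite coefficient `ĝ(α)` of a polynomial. -/
noncomputable def hermiteCoeff {n : ℕ} (g : MvPolynomial (Fin n) ℝ) (α : Fin n → ℕ) : ℝ :=
  hermiteCoeffF (fun x => eval x g) α

/-- The squared Gaussian 2-norm `‖g‖₂² = E_{x ∼ N(0,1)^n}[g(x)²]`. -/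
noncomputable def norm2sq {n : ℕ} (g : MvPolynomial (Fin n) ℝ) : ℝ :=
  ∫ x, (eval x g) ^ 2 ∂(gaussianN n)

/-- The `λ`-zoom of `g` at `x`: `g_{λ|x}(y) = g(√(1-λ)·x + √λ·y)`, as a polynomial in `y`. -/
noncomputable def zoom {n : ℕ} (g : MvPolynomial (Fin n) ℝ) (lam : ℝ) (x : Fin n → ℝ) :
    MvPolynomial (Fin n) ℝ :=
  aeval (fun i => C (Real.sqrt (1 - lam) * x i) + C (Real.sqrt lam) * X i) g

/-- `HyperVar_R[g^{≥m}] = Σ_{|α| ≥ m} R^{2|α|}·ĝ(α)²`. -/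
noncomputable def hyperVarGE {n : ℕ} (R : ℝ) (m : ℕ) (g : MvPolynomial (Fin n) ℝ) : ℝ :=
  ∑' α : Fin n → ℕ, if m ≤ ∑ i, α i then R ^ (2 * ∑ i, α i) * hermiteCoeff g α ^ 2 else 0

/-- `HyperVar_R[g] = Σ_{α ≠ 0} R^{2|α|}·ĝ(α)²`. -/
noncomputable def hyperVar {n : ℕ} (R : ℝ) (g : MvPolynomial (Fin n) ℝ) : ℝ :=
  hyperVarGE R 1 g

/-- A nice distribution of polynomials of degree at most `d` on `ℝ^n`, indexed by
`υ ∈ ℝ^I`: each `g υ` has degree at most `d` and each coefficient of `g υ` is a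
polynomial of degree at most `d` in `υ`. -/
def NiceFamily (n I d : ℕ) (g : (Fin I → ℝ) → MvPolynomial (Fin n) ℝ) : Prop :=
  (∀ υ, (g υ).totalDegree ≤ d) ∧
  ∀ m : Fin n →₀ ℕ, ∃ P : MvPolynomial (Fin I) ℝ,
    P.totalDegree ≤ d ∧ ∀ υ, coeff m (g υ) = eval υ P

/-!
The Hermite polynomials form an Appell sequence, `H_k' = k H_{k-1}`, and Gaussian integration by
parts turns the pairing of a polynomial with `H_b` into the mean of its `b`-th derivative. Together
with Mehler's formula this shows that the `b`-th Hermite coefficient of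
`y ↦ h_k(√(1-λ) x + √λ y)` is `√Pr[Bin(k, λ) = b] · h_{k-b}(x)`. Taking products over the
coordinates and expanding `g`, the `β`-th coefficient of the zoom is the combination
`∑_γ ĝ(γ) √Pr[Bin(γ, λ) = β] · h_{γ-β}(x)` of distinct Hermite polynomials in `x`, and Parseval's
identity gives its second moment.
-/

open scoped Polynomial NNReal

theorem hasDerivAt_gaussianPDFReal (μ : ℝ) (v : ℝ≥0) (x : ℝ) :
    HasDerivAt (gaussianPDFReal μ v) (-(x - μ) / v * gaussianPDFReal μ v x) x := by
  have h_exponent : HasDerivAt (fun x => -(x - μ) ^ 2 / (2 * v)) (-(x - μ) / v) x := by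
    convert! ((((hasDerivAt_id x).sub_const μ).pow 2).neg.div_const (2 * (v : ℝ))) using 1
    rw [← mul_div_mul_left _ _ (two_ne_zero (α := ℝ))]
    simp only [id_eq, Nat.cast_ofNat, Nat.add_one_sub_one, pow_one, mul_one]
    ring
  rw [gaussianPDFReal_def]
  convert! h_exponent.exp.const_mul _ using 1
  ring

theorem integrable_gaussianReal_iff {μ : ℝ} {v : ℝ≥0} (hv : v ≠ 0) {f : ℝ → ℝ} :
    Integrable f (gaussianReal μ v) ↔ Integrable fun x => f x * gaussianPDFReal μ v x := by
  rw [gaussianReal_of_var_ne_zero μ hv, integrable_withDensity_iff_integrable_smul'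
    (measurable_gaussianPDF μ v) (ae_of_all _ fun _ => gaussianPDF_lt_top)]
  simp [mul_comm]

/-- **Stein's lemma**. -/
theorem integral_sub_mul_gaussianReal {μ : ℝ} {v : ℝ≥0} {f f' : ℝ → ℝ}
    (hf : ∀ x, HasDerivAt f (f' x) x) (h_int : Integrable f (gaussianReal μ v))
    (h_int' : Integrable f' (gaussianReal μ v))
    (h_int_mul : Integrable (fun x => (x - μ) * f x) (gaussianReal μ v)) :
    ∫ x, (x - μ) * f x ∂gaussianReal μ v = v * ∫ x, f' x ∂gaussianReal μ v := by
  rcases eq_or_ne v 0 with rfl | hv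
  · simp
  rw [integrable_gaussianReal_iff hv] at h_int h_int' h_int_mul
  have h_parts := integral_mul_deriv_eq_deriv_mul_of_integrable
    (fun x _ => hf x) (fun x _ => hasDerivAt_gaussianPDFReal μ v x)
    ((h_int_mul.const_mul (-(v : ℝ)⁻¹)).congr (ae_of_all _ fun x => by
      simp only [Pi.mul_apply]
      ring)) h_int' h_int
  calc ∫ x, (x - μ) * f x ∂gaussianReal μ v
      = ∫ x, -v * (f x * (-(x - μ) / v * gaussianPDFReal μ v x)) := by
        rw [integral_gaussianReal_eq_integral_smul hv]
        refine integral_congr_ae (ae_of_all _ fun x => ?_)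
        simp only [smul_eq_mul]
        field_simp
    _ = v * ∫ x, f' x ∂gaussianReal μ v := by
        rw [integral_const_mul, h_parts, integral_gaussianReal_eq_integral_smul hv]
        simp [mul_comm]

theorem integrable_polynomial_eval_gaussianReal (μ : ℝ) (v : ℝ≥0) (p : ℝ[X]) :
    Integrable (fun x => p.eval x) (gaussianReal μ v) := by
  induction p using Polynomial.induction_on' with
  | add p q hp hq =>
    simp only [Polynomial.eval_add]
    exact hp.add hq
  | monomial k a =>
    have h_pow : Integrable (fun x : ℝ => x ^ k) (gaussianReal μ v) :=
      integrable_pow_of_mem_interior_integrableExpSet (X := id) (by simp) k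
    simpa only [Polynomial.eval_monomial] using h_pow.const_mul a

/-- The linear functional `p ↦ E_{y ∼ N(0,1)}[p(y)]` on real polynomials. -/
noncomputable def gaussianMean : ℝ[X] →ₗ[ℝ] ℝ where
  toFun p := ∫ y, p.eval y ∂gaussianReal 0 1
  map_add' p q := by
    simpa only [Polynomial.eval_add] using
      integral_add (integrable_polynomial_eval_gaussianReal 0 1 p)
        (integrable_polynomial_eval_gaussianReal 0 1 q)
  map_smul' c p := by
    simpa only [Polynomial.eval_smul] using! integral_smul c _

theorem gaussianMean_apply (p : ℝ[X]) : gaussianMean p = ∫ y, p.eval y ∂gaussianReal 0 1 := rfl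

theorem gaussianMean_C (a : ℝ) : gaussianMean (Polynomial.C a) = a := by
  simp [gaussianMean_apply]

theorem gaussianMean_C_mul (a : ℝ) (p : ℝ[X]) :
    gaussianMean (Polynomial.C a * p) = a * gaussianMean p := by
  rw [← Polynomial.smul_eq_C_mul, map_smul, smul_eq_mul]

theorem gaussianMean_X_mul (p : ℝ[X]) :
    gaussianMean (Polynomial.X * p) = gaussianMean p.derivative := by
  have h_int := integrable_polynomial_eval_gaussianReal 0 1
  have h_int_mul : Integrable (fun x => (x - 0) * p.eval x) (gaussianReal 0 1) :=
    (h_int (Polynomial.X * p)).congr (ae_of_all _ fun x => by simp)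
  have h_stein :=
    integral_sub_mul_gaussianReal p.hasDerivAt (h_int p) (h_int p.derivative) h_int_mul
  simpa [gaussianMean_apply] using h_stein

theorem derivative_hermite_succ (k : ℕ) :
    (Polynomial.hermite (k + 1)).derivative = (k + 1 : ℤ[X]) * Polynomial.hermite k := by
  induction k with
  | zero => simp
  | succ k ih =>
    rw [Polynomial.hermite_succ (k + 1), Polynomial.derivative_sub, Polynomial.derivative_mul, ih,
      Polynomial.derivative_mul, Polynomial.hermite_succ k]
    simp only [Polynomial.derivative_X, Polynomial.derivative_add, Polynomial.derivative_natCast,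
      Polynomial.derivative_one, Nat.cast_add, Nat.cast_one]
    ring

theorem hermite_add_two (k : ℕ) :
    Polynomial.hermite (k + 2) =
      Polynomial.X * Polynomial.hermite (k + 1) - (k + 1 : ℤ[X]) * Polynomial.hermite k := by
  rw [Polynomial.hermite_succ (k + 1), derivative_hermite_succ]

theorem iterate_derivative_hermite (k b : ℕ) :
    Polynomial.derivative^[b] (Polynomial.hermite k) =
      (k.descFactorial b : ℤ[X]) * Polynomial.hermite (k - b) := by
  induction b generalizing k with
  | zero => simp
  | succ b ih =>
    cases k with
    | zero => simp
    | succ k =>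
      rw [Function.iterate_succ_apply, derivative_hermite_succ, ← Nat.cast_succ,
        Polynomial.iterate_derivative_natCast_mul, ih, Nat.succ_descFactorial_succ]
      simp [mul_assoc]

/-- The probabilists' Hermite polynomial `H_k`, as a polynomial with real coefficients. -/
noncomputable def hermiteReal (k : ℕ) : ℝ[X] :=
  (Polynomial.hermite k).map (Int.castRingHom ℝ)

theorem hermiteReal_zero : hermiteReal 0 = 1 := by
  simp [hermiteReal]

theorem hermiteReal_one : hermiteReal 1 = Polynomial.X := by
  simp [hermiteReal]

theorem hermiteReal_succ (k : ℕ) :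
    hermiteReal (k + 1) = Polynomial.X * hermiteReal k - (hermiteReal k).derivative := by
  simp [hermiteReal, Polynomial.derivative_map]

theorem hermiteReal_add_two (k : ℕ) :
    hermiteReal (k + 2) =
      Polynomial.X * hermiteReal (k + 1) - Polynomial.C (k + 1 : ℝ) * hermiteReal k := by
  simp [hermiteReal, hermite_add_two, -Polynomial.hermite_succ]

theorem derivative_hermiteReal_succ (k : ℕ) :
    (hermiteReal (k + 1)).derivative = Polynomial.C (k + 1 : ℝ) * hermiteReal k := by
  simp [hermiteReal, Polynomial.derivative_map, derivative_hermite_succ, -Polynomial.hermite_succ]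

theorem iterate_derivative_hermiteReal (k b : ℕ) :
    Polynomial.derivative^[b] (hermiteReal k) =
      Polynomial.C (k.descFactorial b : ℝ) * hermiteReal (k - b) := by
  simp [hermiteReal, Polynomial.iterate_derivative_map, iterate_derivative_hermite]

theorem span_range_hermiteReal : Submodule.span ℝ (Set.range hermiteReal) = ⊤ := by
  have h_monic (k : ℕ) : (hermiteReal k).Monic := (Polynomial.hermite_monic k).map _
  let S : Polynomial.Sequence ℝ :=
    { elems' := hermiteReal
      degree_eq' k := by
        rw [hermiteReal, (Polynomial.hermite_monic k).degree_map, Polynomial.degree_hermite] }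
  exact S.span fun k => (h_monic k).leadingCoeff ▸ isUnit_one

/-- Rodrigues' formula in weak form: `H_b` represents the functional `p ↦ E[p^{(b)}]`. -/
theorem gaussianMean_mul_hermiteReal (p : ℝ[X]) (b : ℕ) :
    gaussianMean (p * hermiteReal b) = gaussianMean (Polynomial.derivative^[b] p) := by
  induction b generalizing p with
  | zero => simp [hermiteReal_zero]
  | succ b ih =>
    have h_split : p * hermiteReal (b + 1) =
        Polynomial.X * (p * hermiteReal b) - p * (hermiteReal b).derivative := by
      rw [hermiteReal_succ]
      ring
    rw [h_split, map_sub, gaussianMean_X_mul, Polynomial.derivative_mul, map_add,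
      add_sub_cancel_right, ih, Function.iterate_succ_apply]

section Mehler

theorem derivative_comp_C_add_C_mul_X {R : Type*} [CommSemiring R] (p : R[X]) (a t : R) :
    (p.comp (Polynomial.C a + Polynomial.C t * Polynomial.X)).derivative =
      Polynomial.C t * p.derivative.comp (Polynomial.C a + Polynomial.C t * Polynomial.X) := by
  simp [Polynomial.derivative_comp]

theorem iterate_derivative_comp_C_add_C_mul_X {R : Type*} [CommSemiring R] (p : R[X]) (a t : R)
    (b : ℕ) :
    Polynomial.derivative^[b] (p.comp (Polynomial.C a + Polynomial.C t * Polynomial.X)) =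
      Polynomial.C (t ^ b) *
        (Polynomial.derivative^[b] p).comp (Polynomial.C a + Polynomial.C t * Polynomial.X) := by
  induction b with
  | zero => simp
  | succ b ih =>
    rw [Function.iterate_succ_apply', ih, Polynomial.derivative_C_mul,
      derivative_comp_C_add_C_mul_X, Function.iterate_succ_apply', pow_succ, map_mul, mul_assoc]

variable {s t : ℝ}

/-- **Mehler's formula**: the Ornstein–Uhlenbeck semigroup is diagonal in the Hermite basis. -/
theorem gaussianMean_hermiteReal_comp (hst : s ^ 2 + t ^ 2 = 1) (x : ℝ) (k : ℕ) :
    gaussianMean ((hermiteReal k).comp (Polynomial.C (s * x) + Polynomial.C t * Polynomial.X)) =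
      s ^ k * (hermiteReal k).eval x := by
  set ℓ : ℝ[X] := Polynomial.C (s * x) + Polynomial.C t * Polynomial.X with hℓ
  induction k using Nat.twoStepInduction with
  | zero => simpa [hermiteReal_zero] using gaussianMean_C 1
  | one =>
    rw [hermiteReal_one, Polynomial.X_comp, hℓ, map_add, gaussianMean_C, gaussianMean_C_mul,
      ← mul_one Polynomial.X, gaussianMean_X_mul]
    simp
  | more k ih ih_succ =>
    have h_recurrence : (hermiteReal (k + 2)).comp ℓ =
        Polynomial.C (s * x) * (hermiteReal (k + 1)).comp ℓ +
          Polynomial.C t * (Polynomial.X * (hermiteReal (k + 1)).comp ℓ) -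
          Polynomial.C (k + 1 : ℝ) * (hermiteReal k).comp ℓ := by
      rw [hermiteReal_add_two, Polynomial.sub_comp, Polynomial.mul_comp, Polynomial.mul_comp,
        Polynomial.X_comp, Polynomial.C_comp, hℓ]
      ring
    rw [h_recurrence, map_sub, map_add, gaussianMean_C_mul, gaussianMean_C_mul,
      gaussianMean_C_mul, gaussianMean_X_mul, derivative_comp_C_add_C_mul_X, gaussianMean_C_mul,
      derivative_hermiteReal_succ, Polynomial.mul_comp, Polynomial.C_comp, gaussianMean_C_mul,
      ← hℓ, ih, ih_succ, hermiteReal_add_two]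
    simp only [Polynomial.eval_sub, Polynomial.eval_mul, Polynomial.eval_X, Polynomial.eval_C]
    linear_combination (s ^ k * (k + 1) * (hermiteReal k).eval x) * hst

theorem gaussianMean_hermiteReal_comp_mul_hermiteReal (hst : s ^ 2 + t ^ 2 = 1) (x : ℝ)
    (k b : ℕ) :
    gaussianMean ((hermiteReal k).comp (Polynomial.C (s * x) + Polynomial.C t * Polynomial.X) *
        hermiteReal b) =
      k.descFactorial b * (s ^ (k - b) * t ^ b) * (hermiteReal (k - b)).eval x := by
  rw [gaussianMean_mul_hermiteReal, iterate_derivative_comp_C_add_C_mul_X,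
    iterate_derivative_hermiteReal, Polynomial.mul_comp, Polynomial.C_comp, gaussianMean_C_mul,
    gaussianMean_C_mul, gaussianMean_hermiteReal_comp hst]
  ring

theorem hermiteFn_eq (k : ℕ) (x : ℝ) :
    hermiteFn k x = (hermiteReal k).eval x / √(k.factorial) := rfl

theorem hermiteFn_zero (x : ℝ) : hermiteFn 0 x = 1 := by
  simp [hermiteFn_eq, hermiteReal_zero]

theorem hermiteFn_affine_mul_hermiteFn (s t x y : ℝ) (k b : ℕ) :
    hermiteFn k (s * x + t * y) * hermiteFn b y =
      (√(k.factorial) * √(b.factorial))⁻¹ *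
        ((hermiteReal k).comp (Polynomial.C (s * x) + Polynomial.C t * Polynomial.X) *
          hermiteReal b).eval y := by
  simp only [hermiteFn_eq, Polynomial.eval_mul, Polynomial.eval_comp, Polynomial.eval_add,
    Polynomial.eval_C, Polynomial.eval_X]
  field_simp

theorem integrable_hermiteFn_affine_mul_hermiteFn (s t x : ℝ) (k b : ℕ) :
    Integrable (fun y => hermiteFn k (s * x + t * y) * hermiteFn b y) (gaussianReal 0 1) := by
  simp only [hermiteFn_affine_mul_hermiteFn]
  exact (integrable_polynomial_eval_gaussianReal 0 1 _).const_mul _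

theorem descFactorial_div_sqrt_factorial {k b : ℕ} (hbk : b ≤ k) :
    (k.descFactorial b : ℝ) / (√(k.factorial) * √(b.factorial)) =
      √(k.choose b) / √((k - b).factorial) := by
  have h_desc : (k.descFactorial b : ℝ) = k.choose b * b.factorial := by
    rw [Nat.descFactorial_eq_factorial_mul_choose, Nat.cast_mul, mul_comm]
  have h_fact : (k.factorial : ℝ) = k.choose b * b.factorial * (k - b).factorial := by
    exact_mod_cast (Nat.choose_mul_factorial_mul_factorial hbk).symm
  have h_choose : 0 < (k.choose b : ℝ) := by exact_mod_cast Nat.choose_pos hbk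
  rw [h_desc, h_fact, Real.sqrt_mul (by positivity), Real.sqrt_mul (by positivity)]
  field_simp
  rw [Real.sq_sqrt (by positivity), Real.sq_sqrt (by positivity)]

theorem integral_hermiteFn_affine_mul_hermiteFn (hst : s ^ 2 + t ^ 2 = 1) (x : ℝ) (k b : ℕ) :
    ∫ y, hermiteFn k (s * x + t * y) * hermiteFn b y ∂gaussianReal 0 1 =
      √(k.choose b) * (s ^ (k - b) * t ^ b) * hermiteFn (k - b) x := by
  simp only [hermiteFn_affine_mul_hermiteFn]
  rw [integral_const_mul, ← gaussianMean_apply, gaussianMean_hermiteReal_comp_mul_hermiteReal hst]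
  rcases lt_or_ge k b with hkb | hbk
  · simp [Nat.descFactorial_of_lt hkb, Nat.choose_eq_zero_of_lt hkb]
  · rw [hermiteFn_eq]
    linear_combination (s ^ (k - b) * t ^ b * (hermiteReal (k - b)).eval x) *
      descFactorial_div_sqrt_factorial hbk

theorem integral_hermiteFn_mul_hermiteFn (k b : ℕ) :
    ∫ y, hermiteFn k y * hermiteFn b y ∂gaussianReal 0 1 = if k = b then 1 else 0 := by
  have h := integral_hermiteFn_affine_mul_hermiteFn (s := 0) (t := 1) (by norm_num) 0 k b
  simp only [zero_mul, zero_add, one_mul, one_pow, mul_one] at h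
  rw [h]
  rcases lt_trichotomy k b with hkb | rfl | hbk
  · simp [Nat.choose_eq_zero_of_lt hkb, hkb.ne]
  · simp [hermiteFn_zero]
  · simp [(Nat.sub_pos_of_lt hbk).ne', hbk.ne']

theorem polynomial_eval_mem_span_hermiteFn (p : ℝ[X]) :
    (fun x => p.eval x) ∈ Submodule.span ℝ (Set.range hermiteFn) := by
  have hp : p ∈ Submodule.span ℝ (Set.range hermiteReal) :=
    span_range_hermiteReal ▸ Submodule.mem_top
  induction hp using Submodule.span_induction with
  | mem _ h =>
    obtain ⟨k, rfl⟩ := h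
    have h_smul : (fun x => (hermiteReal k).eval x) = √(k.factorial) • hermiteFn k := by
      ext x
      rw [Pi.smul_apply, smul_eq_mul, hermiteFn_eq]
      field_simp
    exact h_smul ▸ Submodule.smul_mem _ _ (Submodule.subset_span ⟨k, rfl⟩)
  | zero =>
    simp only [Polynomial.eval_zero]
    exact Submodule.zero_mem _
  | add p q _ _ hp hq =>
    simp only [Polynomial.eval_add]
    exact Submodule.add_mem _ hp hq
  | smul c p _ hp =>
    simp only [Polynomial.eval_smul]
    exact Submodule.smul_mem _ c hp

end Mehler

section Multivariate

variable {n : ℕ}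

theorem integrable_hermiteMv_affine_mul_hermiteMv (s t : ℝ) (x : Fin n → ℝ) (γ β : Fin n → ℕ) :
    Integrable (fun y => hermiteMv γ (fun i => s * x i + t * y i) * hermiteMv β y)
      (gaussianN n) := by
  simp only [hermiteMv, ← Finset.prod_mul_distrib]
  exact Integrable.fintype_prod
    (f := fun i y => hermiteFn (γ i) (s * x i + t * y) * hermiteFn (β i) y)
    fun i => integrable_hermiteFn_affine_mul_hermiteFn s t (x i) (γ i) (β i)

theorem integrable_hermiteMv_mul_hermiteMv (α β : Fin n → ℕ) :
    Integrable (fun y => hermiteMv α y * hermiteMv β y) (gaussianN n) := by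
  simpa using integrable_hermiteMv_affine_mul_hermiteMv 0 1 0 α β

theorem integral_hermiteMv_mul_hermiteMv (α β : Fin n → ℕ) :
    ∫ y, hermiteMv α y * hermiteMv β y ∂gaussianN n = if α = β then 1 else 0 := by
  simp only [hermiteMv, ← Finset.prod_mul_distrib]
  refine (integral_fintype_prod_eq_prod
    fun i y => hermiteFn (α i) y * hermiteFn (β i) y).trans ?_
  simp only [integral_hermiteFn_mul_hermiteFn, Finset.prod_ite_zero, Finset.prod_const_one,
    Finset.mem_univ, forall_const, funext_iff]

/-- **Parseval's identity** for a finite combination of distinct Hermite polynomials. -/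
theorem integral_sq_sum_hermiteMv {ι : Type*} {S : Finset ι} {α : ι → Fin n → ℕ}
    (hα : Set.InjOn α S) (c : ι → ℝ) :
    ∫ x, (∑ i ∈ S, c i * hermiteMv (α i) x) ^ 2 ∂gaussianN n = ∑ i ∈ S, c i ^ 2 := by
  have h_int (i j : ι) := (integrable_hermiteMv_mul_hermiteMv (α i) (α j)).const_mul (c i * c j)
  simp only [sq, Finset.sum_mul_sum, mul_mul_mul_comm (c _) (hermiteMv _ _)]
  rw [integral_finsetSum _ fun i _ => integrable_finsetSum _ fun j _ => h_int i j]
  refine Finset.sum_congr rfl fun i hi => ?_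
  rw [integral_finsetSum _ fun j _ => h_int i j, Finset.sum_eq_single_of_mem i hi]
  · simp [integral_const_mul, integral_hermiteMv_mul_hermiteMv]
  · intro j hj hji
    simp [integral_const_mul, integral_hermiteMv_mul_hermiteMv, hα.ne hi hj hji.symm]

theorem prod_mem_span_hermiteMv {f : Fin n → ℝ → ℝ}
    (hf : ∀ i, f i ∈ Submodule.span ℝ (Set.range hermiteFn)) :
    (fun x : Fin n → ℝ => ∏ i, f i (x i)) ∈ Submodule.span ℝ (Set.range (hermiteMv (n := n))) := by
  choose a ha using fun i => Finsupp.mem_span_range_iff_exists_finsupp.1 (hf i)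
  have h_expand : (fun x : Fin n → ℝ => ∏ i, f i (x i)) =
      ∑ α ∈ Fintype.piFinset fun i => (a i).support, (∏ i, a i (α i)) • hermiteMv α := by
    ext x
    simp only [← ha, Finsupp.sum, Finset.sum_apply, Pi.smul_apply, smul_eq_mul, hermiteMv,
      Finset.prod_univ_sum, Finset.prod_mul_distrib]
  rw [h_expand]
  exact Submodule.sum_mem _ fun α _ => Submodule.smul_mem _ _ (Submodule.subset_span ⟨α, rfl⟩)

theorem eval_mem_span_hermiteMv (g : MvPolynomial (Fin n) ℝ) :
    (fun x => eval x g) ∈ Submodule.span ℝ (Set.range (hermiteMv (n := n))) := by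
  have h_monomials : (fun x => eval x g) =
      ∑ d ∈ g.support, g.coeff d • fun x : Fin n → ℝ => ∏ i, x i ^ d i := by
    ext x
    simp [eval_eq']
  rw [h_monomials]
  refine Submodule.sum_mem _ fun d _ => Submodule.smul_mem _ _ ?_
  refine prod_mem_span_hermiteMv (f := fun i t => t ^ d i) fun i => ?_
  simpa only [Polynomial.eval_pow, Polynomial.eval_X] using
    polynomial_eval_mem_span_hermiteFn (Polynomial.X ^ d i)

theorem hermiteCoeffF_sum_hermiteMv (a : (Fin n → ℕ) →₀ ℝ) (α : Fin n → ℕ) :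
    hermiteCoeffF (fun x => ∑ γ ∈ a.support, a γ * hermiteMv γ x) α = a α := by
  simp only [hermiteCoeffF, Finset.sum_mul, mul_assoc]
  rw [integral_finsetSum _ fun γ _ => (integrable_hermiteMv_mul_hermiteMv γ α).const_mul _]
  simpa [integral_const_mul, integral_hermiteMv_mul_hermiteMv] using Eq.symm

theorem exists_hermite_expansion (g : MvPolynomial (Fin n) ℝ) :
    ∃ S : Finset (Fin n → ℕ), (∀ γ ∉ S, hermiteCoeff g γ = 0) ∧
      ∀ x, eval x g = ∑ γ ∈ S, hermiteCoeff g γ * hermiteMv γ x := by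
  obtain ⟨a, ha⟩ := Finsupp.mem_span_range_iff_exists_finsupp.1 (eval_mem_span_hermiteMv g)
  have h_eval (x : Fin n → ℝ) : eval x g = ∑ γ ∈ a.support, a γ * hermiteMv γ x := by
    simp [← congrFun ha x, Finsupp.sum]
  have h_coeff (γ : Fin n → ℕ) : hermiteCoeff g γ = a γ := by
    simp only [hermiteCoeff, h_eval, hermiteCoeffF_sum_hermiteMv]
  refine ⟨a.support, fun γ hγ => ?_, fun x => ?_⟩
  · rw [h_coeff, Finsupp.notMem_support_iff.1 hγ]
  · simp only [h_coeff, h_eval]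

end Multivariate

section Zoom

variable {ι : Type*} [Fintype ι] {n : ℕ} {lam : ℝ}

/-- The probability `Pr[Bin(γ, λ) = β]` that independent binomial variables `Bin(γ_j, λ)` take the
values `β_j`. The exponent `γ j - β j` is truncated, so it is the binomial coefficient that makes
the weight vanish unless `β ≤ γ`. -/
noncomputable def binomialWeight (lam : ℝ) (γ β : ι → ℕ) : ℝ :=
  ∏ j, ((γ j).choose (β j) : ℝ) * lam ^ β j * (1 - lam) ^ (γ j - β j)

theorem binomialWeight_eq_zero {γ β : ι → ℕ} (h : ¬∀ j, β j ≤ γ j) :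
    binomialWeight lam γ β = 0 := by
  obtain ⟨j, hj⟩ := not_forall.1 h
  exact Finset.prod_eq_zero (Finset.mem_univ j) (by simp [Nat.choose_eq_zero_of_lt (not_le.1 hj)])

theorem binomialWeight_nonneg (h0 : 0 ≤ lam) (h1 : lam ≤ 1) (γ β : ι → ℕ) :
    0 ≤ binomialWeight lam γ β := by
  refine Finset.prod_nonneg fun j _ => ?_
  exact mul_nonneg (by positivity) (pow_nonneg (sub_nonneg.2 h1) _)

theorem sqrt_binomialWeight (h0 : 0 ≤ lam) (h1 : lam ≤ 1) (γ β : ι → ℕ) :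
    √(binomialWeight lam γ β) =
      ∏ j, √((γ j).choose (β j)) * (√(1 - lam) ^ (γ j - β j) * √lam ^ β j) := by
  rw [Real.sqrt_eq_iff_mul_self_eq (binomialWeight_nonneg h0 h1 γ β) (by positivity), ← sq,
    ← Finset.prod_pow, binomialWeight]
  refine Finset.prod_congr rfl fun j _ => ?_
  rw [mul_pow, mul_pow, Real.sq_sqrt (Nat.cast_nonneg _), pow_right_comm, pow_right_comm (√lam),
    Real.sq_sqrt h0, Real.sq_sqrt (sub_nonneg.2 h1)]
  ring

theorem hermiteCoeffF_hermiteMv_affine (h0 : 0 ≤ lam) (h1 : lam ≤ 1) (x : Fin n → ℝ)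
    (γ β : Fin n → ℕ) :
    hermiteCoeffF (fun y => hermiteMv γ fun i => √(1 - lam) * x i + √lam * y i) β =
      √(binomialWeight lam γ β) * hermiteMv (γ - β) x := by
  have h_sq : √(1 - lam) ^ 2 + √lam ^ 2 = 1 := by
    rw [Real.sq_sqrt h0, Real.sq_sqrt (sub_nonneg.2 h1), sub_add_cancel]
  simp only [hermiteCoeffF, hermiteMv, ← Finset.prod_mul_distrib, sqrt_binomialWeight h0 h1]
  refine (integral_fintype_prod_eq_prod fun i y =>
    hermiteFn (γ i) (√(1 - lam) * x i + √lam * y) * hermiteFn (β i) y).trans ?_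
  exact Finset.prod_congr rfl fun i _ =>
    integral_hermiteFn_affine_mul_hermiteFn h_sq (x i) (γ i) (β i)

theorem eval_zoom (g : MvPolynomial (Fin n) ℝ) (lam : ℝ) (x y : Fin n → ℝ) :
    eval y (zoom g lam x) = eval (fun i => √(1 - lam) * x i + √lam * y i) g := by
  induction g using MvPolynomial.induction_on with
  | C a => simp [zoom]
  | add p q hp hq => simpa [zoom] using congrArg₂ (· + ·) hp hq
  | mul_X p i hp => simpa [zoom] using Or.inl hp

theorem hermiteCoeff_zoom {g : MvPolynomial (Fin n) ℝ} {S : Finset (Fin n → ℕ)}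
    {c : (Fin n → ℕ) → ℝ} (hg : ∀ x, eval x g = ∑ γ ∈ S, c γ * hermiteMv γ x)
    (h0 : 0 ≤ lam) (h1 : lam ≤ 1) (x : Fin n → ℝ) (β : Fin n → ℕ) :
    hermiteCoeff (zoom g lam x) β =
      ∑ γ ∈ S with ∀ j, β j ≤ γ j,
        c γ * √(binomialWeight lam γ β) * hermiteMv (γ - β) x := by
  have h_int (γ : Fin n → ℕ) :=
    (integrable_hermiteMv_affine_mul_hermiteMv (√(1 - lam)) (√lam) x γ β).const_mul (c γ)
  have h_all : hermiteCoeff (zoom g lam x) β =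
      ∑ γ ∈ S, c γ * √(binomialWeight lam γ β) * hermiteMv (γ - β) x := by
    simp only [hermiteCoeff, hermiteCoeffF, eval_zoom, hg, Finset.sum_mul, mul_assoc]
    rw [integral_finsetSum _ fun γ _ => h_int γ]
    simp only [integral_const_mul]
    exact Finset.sum_congr rfl fun γ _ =>
      congrArg (c γ * ·) (hermiteCoeffF_hermiteMv_affine h0 h1 x γ β)
  rw [h_all, Finset.sum_filter_of_ne]
  intro γ _ h_ne
  by_contra h
  simp [binomialWeight_eq_zero h] at h_ne

end Zoom

/-- Expected squared Hermite coefficients of a random zoom: for a polynomial `g`,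
`0 ≤ λ ≤ 1` and a multi-index `β`,
`E_{x ∼ N(0,1)^n}[(ĝ_{λ|x}(β))²]
  = Σ_{γ ≥ β} (∏_j C(γ_j, β_j)·λ^{β_j}·(1-λ)^{γ_j - β_j})·ĝ(γ)²`. -/
theorem expected_sq_hermite_coeff_of_zoom (n : ℕ) (g : MvPolynomial (Fin n) ℝ)
    (lam : ℝ) (h0 : 0 ≤ lam) (h1 : lam ≤ 1) (β : Fin n → ℕ) :
    (∫ x, (hermiteCoeff (zoom g lam x) β) ^ 2 ∂(gaussianN n)) =
      ∑' γ : Fin n → ℕ,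
        if ∀ j, β j ≤ γ j then
          (∏ j, ((γ j).choose (β j) : ℝ) * lam ^ (β j) * (1 - lam) ^ (γ j - β j)) *
            hermiteCoeff g γ ^ 2
        else 0 := by
  obtain ⟨S, hS, hg⟩ := exists_hermite_expansion g
  have h_inj : Set.InjOn (fun γ => γ - β) {γ ∈ S | ∀ j, β j ≤ γ j} :=
    fun _ hγ _ hδ => (tsub_left_inj hγ.2 hδ.2).1
  calc ∫ x, hermiteCoeff (zoom g lam x) β ^ 2 ∂gaussianN n
      = ∫ x, (∑ γ ∈ S with ∀ j, β j ≤ γ j,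
          hermiteCoeff g γ * √(binomialWeight lam γ β) * hermiteMv (γ - β) x) ^ 2 ∂gaussianN n := by
        simp only [hermiteCoeff_zoom hg h0 h1]
    _ = ∑ γ ∈ S with ∀ j, β j ≤ γ j, (hermiteCoeff g γ * √(binomialWeight lam γ β)) ^ 2 :=
        integral_sq_sum_hermiteMv (by simpa using h_inj) _
    _ = ∑ γ ∈ S, if ∀ j, β j ≤ γ j then binomialWeight lam γ β * hermiteCoeff g γ ^ 2 else 0 := by
        simp only [Finset.sum_filter, mul_pow, Real.sq_sqrt (binomialWeight_nonneg h0 h1 _ _),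
          mul_comm]
    _ = _ := (tsum_eq_sum fun γ hγ => by simp [hS γ hγ]).symm
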